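/- There exists a family of bubble parameters compatible with t, i.e. a function c : I → X → kˣ such that c i (λ + α j) = (t i j) * (c i λ) for all i, j ∈ I and λ ∈ X. -/

import Mathlib

/-!
The `ℤ`-span `S` of the simple roots is free on them, so each row `t i` extends to a homomorphism
`f i : S → kˣ`. Choosing a representative in each coset of `S`, every weight is uniquely
`s + r` with `s ∈ S` and `r` a representative, and `c i (s + r) = f i s` is compatible with `t`.
-/

theorem exists_forall_map_coe_add_eq {G A : Type*} [AddGroup G] [AddZeroClass A]
    {H : AddSubgroup G} (f : H →+ A) :
    ∃ c : G → A, ∀ (h : H) (g : G), c (h + g) = f h + c g := by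
  obtain ⟨T, hT, -⟩ := H.exists_isComplement_right 0
  choose decomp decomp_sum decomp_unique using AddSubgroup.isComplement_iff_existsUnique.1 hT
  refine ⟨fun g ↦ f (decomp g).1, fun h g ↦ ?_⟩
  have decomp_add : decomp (h + g) = (h + (decomp g).1, (decomp g).2) :=
    (decomp_unique (h + g) (h + (decomp g).1, (decomp g).2)
      (by simp [add_assoc, decomp_sum])).symm
  simp [decomp_add]

theorem exists_linearMap_span_range_apply_eq {R M N ι : Type*} [Semiring R]
    [AddCommMonoid M] [Module R M] [AddCommMonoid N] [Module R N]
    {v : ι → M} (hv : LinearIndependent R v) (w : ι → N) :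
    ∃ f : Submodule.span R (Set.range v) →ₗ[R] N,
      ∀ i, f ⟨v i, Submodule.subset_span (Set.mem_range_self i)⟩ = w i :=
  ⟨Finsupp.linearCombination R w ∘ₗ hv.repr, fun i ↦ by simp [hv.repr_eq_single i]⟩

theorem exists_bubbleParams_general {X G I J : Type*} [AddCommGroup X] [CommGroup G]
    (α : I → X) (hα : LinearIndependent ℤ α) (t : J → I → G) :
    ∃ c : J → X → G, ∀ (i : J) (j : I) (lam : X), c i (lam + α j) = t i j * c i lam := by
  choose f hf using fun i ↦
    exists_linearMap_span_range_apply_eq hα (fun j ↦ Additive.ofMul (t i j))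
  choose c hc using fun i ↦ exists_forall_map_coe_add_eq
    (H := (Submodule.span ℤ (Set.range α)).toAddSubgroup) (f i).toAddMonoidHom
  refine ⟨fun i lam ↦ (c i lam).toMul, fun i j lam ↦ ?_⟩
  have hcα : c i (α j + lam) = Additive.ofMul (t i j) + c i lam := by
    rw [← hf i j]
    exact hc i ⟨α j, Submodule.subset_span (Set.mem_range_self j)⟩ lam
  rw [add_comm lam]
  exact congrArg Additive.toMul hcα

/-- There exists a family of bubble parameters compatible with the choice of
scalars `t`: a function `c : I → X → kˣ` with `c i (λ + α j) = t i j * c i λ`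
for all `i, j ∈ I` and `λ ∈ X`.  Here `X` is a free `ℤ`-module and the simple
roots `α` are `ℤ`-linearly independent. -/
theorem exists_bubbleParams
    {k : Type*} [CommRing k] {X : Type*} [AddCommGroup X] [Module.Free ℤ X]
    {I : Type*} (α : I → X) (hα : LinearIndependent ℤ α)
    (t : I → I → kˣ) :
    ∃ c : I → X → kˣ, ∀ (i j : I) (lam : X), c i (lam + α j) = t i j * c i lam :=
  exists_bubbleParams_general α hα t
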